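/- Let α, β : I_M → Y be paths in a digital image Y ⊆ ℤⁿ and k ≥ 1, and let α̂, β̂ : I_{(2k+1)M+2k} → S(Y, 2k+1) be their standard covers. If α and β are homotopic, then α̂ and β̂ are homotopic as maps I_{(2k+1)M+2k} → S(Y, 2k+1). -/

import Mathlib

open Set

/-- Adjacency of points in `ℤⁿ`: all coordinates differ by at most 1. -/
def adj {n : ℕ} (x y : Fin n → ℤ) : Prop := ∀ i, |x i - y i| ≤ 1

/-- The `k`-subdivision of a digital image `X ⊆ ℤⁿ`. -/
def Subdiv {n : ℕ} (X : Set (Fin n → ℤ)) (k : ℤ) : Set (Fin n → ℤ) :=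
  { y | (fun i => (y i).fdiv k) ∈ X }

/-- The standard projection `ρ_k`, coordinatewise floor-division by `k`. -/
def rho {n : ℕ} (k : ℤ) (y : Fin n → ℤ) : Fin n → ℤ := fun i => (y i).fdiv k

/-- The centre `ī = (2k+1)i + k` of `S(i, 2k+1) ⊆ ℤ`. -/
def bar (k i : ℤ) : ℤ := (2 * k + 1) * i + k

/-- The centre `ȳ = (2k+1)y + (k,…,k)` of `S(y, 2k+1) ⊆ ℤⁿ`. -/
def barPt {n : ℕ} (k : ℤ) (y : Fin n → ℤ) : Fin n → ℤ := fun i => (2 * k + 1) * y i + k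

/-- The standard cover `α̂ : I_{(2k+1)N+2k} → ℤⁿ` of a path `α : I_N → Y ⊆ ℤⁿ`,
with respect to the odd subdivision factor `2k+1`:
`α̂(j) = \overline{α(0)}` for `0 ≤ j ≤ k-1`;
`α̂(ī + t) = \overline{α(i)} + t (α(i+1) - α(i))` for `0 ≤ i ≤ N-1`, `0 ≤ t ≤ 2k`
(here `j = ī + t` has `i = (j-k) div (2k+1)` and `t = (j-k) mod (2k+1)`);
`α̂(j) = \overline{α(N)}` for `(2k+1)N + k ≤ j`. -/
def cover {n : ℕ} (k N : ℤ) (α : ℤ → Fin n → ℤ) (j : ℤ) : Fin n → ℤ :=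
  if j ≤ k - 1 then barPt k (α 0)
  else if (2 * k + 1) * N + k ≤ j then barPt k (α N)
  else fun i =>
    barPt k (α ((j - k).fdiv (2 * k + 1))) i
      + ((j - k) % (2 * k + 1)) *
          (α ((j - k).fdiv (2 * k + 1) + 1) i - α ((j - k).fdiv (2 * k + 1)) i)


/-- `Homotopic M Y f g`: maps `f, g : I_M → Y` are homotopic, i.e. for some `N ≥ 1`
there is a continuous `H : I_M × I_N → Y` (product adjacency) with `H(x,0) = f(x)` and
`H(x,N) = g(x)` for all `x ∈ I_M`. -/
def Homotopic {n : ℕ} (M : ℤ) (Y : Set (Fin n → ℤ)) (f g : ℤ → Fin n → ℤ) : Prop :=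
  ∃ N : ℤ, 1 ≤ N ∧ ∃ H : ℤ → ℤ → Fin n → ℤ,
    (∀ x ∈ Icc (0 : ℤ) M, ∀ t ∈ Icc (0 : ℤ) N, H x t ∈ Y) ∧
    (∀ x ∈ Icc (0 : ℤ) M, ∀ t ∈ Icc (0 : ℤ) N,
      ∀ x' ∈ Icc (0 : ℤ) M, ∀ t' ∈ Icc (0 : ℤ) N,
      |x - x'| ≤ 1 → |t - t'| ≤ 1 → adj (H x t) (H x' t')) ∧
    (∀ x ∈ Icc (0 : ℤ) M, H x 0 = f x) ∧
    (∀ x ∈ Icc (0 : ℤ) M, H x N = g x)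

/-!
Clamping extends a path to all of `ℤ` and a homotopy to a map `ℤ² → Y`.
A digitally continuous map `h` is `1`-Lipschitz for the sup metric. Scaling it by `m` prescribes a
`1`-Lipschitz map on the centres of the cubes of side `m`; McShane's extension, rounded down, is
digitally continuous and covers `h` because no point of a cube is further than `(m - 1) / 2` from
its centre. So the homotopy between `α` and `β` lifts to `S(Y, m)`.

The ends of the lift need not be `α̂` and `β̂`, but they have the same projections. Two maps
`f`, `g` with the same projection are homotopic: raising a horizontal level `c` from below both,
the map `f ⊔ (g ⊓ c)` moves inside the cubes from `f` to `f ⊔ g`, and likewise `g` moves to `f ⊔ g`.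
-/

section Adjacency

variable {n : ℕ} {x y : Fin n → ℤ}

protected theorem adj.refl (x : Fin n → ℤ) : adj x x := fun i => by simp

protected theorem adj.symm (h : adj x y) : adj y x := fun i => abs_sub_comm (x i) (y i) ▸ h i

theorem adj_iff_dist_le_one : adj x y ↔ dist x y ≤ 1 := by
  simp only [adj, dist_pi_le_iff zero_le_one, Int.dist_eq]
  exact_mod_cast Iff.rfl

theorem adj_floor {x y : Fin n → ℝ} (h : dist x y ≤ 1) :
    adj (fun i => ⌊x i⌋) (fun i => ⌊y i⌋) := by
  have floor_le : ∀ {a b : ℝ}, a ≤ b + 1 → ⌊a⌋ ≤ ⌊b⌋ + 1 := fun hab =>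
    (Int.floor_mono hab).trans_eq (Int.floor_add_one _)
  intro i
  have hi := abs_le.1 ((dist_pi_le_iff zero_le_one).1 h i)
  have hxy := floor_le (by linarith : x i ≤ y i + 1)
  have hyx := floor_le (by linarith : y i ≤ x i + 1)
  rw [abs_le]
  constructor <;> linarith

theorem adj_of_abs_sub_le_one {f : ℤ → Fin n → ℤ} (hf : ∀ i, adj (f i) (f (i + 1))) {i j : ℤ}
    (hij : |i - j| ≤ 1) : adj (f i) (f j) := by
  rw [abs_le] at hij
  obtain rfl | rfl | rfl : j = i ∨ j = i + 1 ∨ i = j + 1 := by omega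
  exacts [adj.refl _, hf i, (hf j).symm]

theorem exists_adj_dist_le {r : ℕ} (h : dist x y ≤ r + 1) : ∃ z, adj x z ∧ dist z y ≤ r := by
  refine ⟨fun i => max (x i - 1) (min (x i + 1) (y i)), fun i => ?_, ?_⟩
  · dsimp only
    rw [abs_le]
    omega
  · rw [dist_pi_le_iff (by positivity)] at h ⊢
    intro i
    have hi := h i
    rw [Int.dist_eq] at hi ⊢
    norm_cast at hi ⊢
    rw [abs_le] at hi ⊢
    push_cast at hi
    omega

theorem dist_le_floor_dist : dist x y ≤ ⌊dist x y⌋₊ := by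
  refine (dist_pi_le_iff (by positivity)).2 fun i => ?_
  have hi := dist_le_pi_dist x y i
  rw [Int.dist_eq, ← Int.cast_sub, ← Int.cast_abs, Int.abs_eq_natAbs, Int.cast_natCast] at hi ⊢
  exact_mod_cast Nat.le_floor hi

/-- Continuity of a map `ℤᵈ → ℤⁿ` between digital images. -/
def DigitallyContinuous {d : ℕ} (h : (Fin d → ℤ) → Fin n → ℤ) : Prop :=
  ∀ x y, adj x y → adj (h x) (h y)

theorem DigitallyContinuous.lipschitzWith {d : ℕ} {h : (Fin d → ℤ) → Fin n → ℤ}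
    (hh : DigitallyContinuous h) : LipschitzWith 1 h := by
  have dist_le_nat : ∀ r : ℕ, ∀ x y, dist x y ≤ r → dist (h x) (h y) ≤ r := by
    intro r
    induction r with
    | zero =>
      intro x y hxy
      have : x = y := dist_le_zero.1 (by simpa using hxy)
      simp [this]
    | succ r ih =>
      intro x y hxy
      obtain ⟨z, hxz, hzy⟩ := exists_adj_dist_le (by exact_mod_cast hxy)
      calc dist (h x) (h y) ≤ dist (h x) (h z) + dist (h z) (h y) := dist_triangle _ _ _
        _ ≤ 1 + r := add_le_add (adj_iff_dist_le_one.1 (hh x z hxz)) (ih z y hzy)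
        _ = (r + 1 : ℕ) := by push_cast; ring
  refine LipschitzWith.of_dist_le_mul fun x y => ?_
  calc dist (h x) (h y) ≤ ⌊dist x y⌋₊ := dist_le_nat _ x y dist_le_floor_dist
    _ ≤ dist x y := Nat.floor_le dist_nonneg
    _ = (1 : NNReal) * dist x y := by rw [NNReal.coe_one, one_mul]

end Adjacency

section Subdivision

variable {d n : ℕ} {m : ℤ}

theorem fdiv_eq_iff (hm : 0 < m) {x q : ℤ} : x.fdiv m = q ↔ m * q ≤ x ∧ x < m * q + m := by
  rw [Int.fdiv_eq_ediv_of_nonneg _ hm.le, le_antisymm_iff, ← Int.lt_add_one_iff,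
    Int.ediv_lt_iff_lt_mul hm, Int.le_ediv_iff_mul_le hm, and_comm, mul_comm q, add_mul, one_mul,
    mul_comm q]

theorem rho_eq_iff (hm : 0 < m) {x q : Fin n → ℤ} :
    rho m x = q ↔ ∀ i, m * q i ≤ x i ∧ x i < m * q i + m := by
  simp only [funext_iff, rho, fdiv_eq_iff hm]

theorem rho_eq_of_le_of_le_sup (hm : 0 < m) {x y z : Fin n → ℤ} (hxy : rho m x = rho m y)
    (hxz : x ≤ z) (hz : z ≤ x ⊔ y) : rho m z = rho m x := by
  have hx := (rho_eq_iff hm).1 (rfl : rho m x = rho m x)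
  have hy := (rho_eq_iff hm).1 hxy.symm
  exact (rho_eq_iff hm).2 fun i =>
    ⟨(hx i).1.trans (hxz i), (hz i).trans_lt (max_lt (hx i).2 (hy i).2)⟩

theorem fdiv_mem_Icc (hm : 0 < m) {M L j : ℤ} (hL : L < m * M + m) (hj : j ∈ Icc 0 L) :
    j.fdiv m ∈ Icc 0 M := by
  rw [Int.fdiv_eq_ediv_of_nonneg _ hm.le]
  exact ⟨Int.ediv_nonneg hj.1 hm.le,
    Int.lt_add_one_iff.1 (Int.ediv_lt_of_lt_mul hm (by linarith [hj.2]))⟩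

/-- The barycentre in `ℝⁿ` of the cube `S({q}, m)`; for `m = 2k+1` it is the point `q̄`. -/
noncomputable def cubeCenter (m : ℤ) (q : Fin n → ℤ) : Fin n → ℝ :=
  fun i => m * q i + (m - 1) / 2

theorem dist_cubeCenter (hm : 0 ≤ m) (p q : Fin n → ℤ) :
    dist (cubeCenter m p) (cubeCenter m q) = m * dist p q := by
  have affine : ∀ q : Fin n → ℤ, cubeCenter m q =
      (m : ℝ) • (fun i => (q i : ℝ)) + fun _ => ((m : ℝ) - 1) / 2 := fun _ => rfl
  have hm' : (0 : ℝ) ≤ m := by exact_mod_cast hm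
  rw [affine, affine, dist_add_right, dist_smul₀, Real.norm_of_nonneg hm']
  rfl

theorem cubeCenter_injective (hm : 0 < m) : Function.Injective (cubeCenter (n := n) m) := by
  intro p q hpq
  have : (m : ℝ) * dist p q = 0 := by rw [← dist_cubeCenter hm.le, hpq, dist_self]
  exact dist_eq_zero.1 ((mul_eq_zero.1 this).resolve_left (by exact_mod_cast hm.ne'))

theorem dist_cubeCenter_rho_le (hm : 0 < m) (x : Fin n → ℤ) :
    dist (fun i => (x i : ℝ)) (cubeCenter m (rho m x)) ≤ (m - 1) / 2 := by
  have hm' : (1 : ℝ) ≤ m := by exact_mod_cast hm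
  refine (dist_pi_le_iff (by linarith)).2 fun i => ?_
  obtain ⟨hl, hu⟩ := (rho_eq_iff hm).1 (rfl : rho m x = rho m x) i
  have hl' : (m * rho m x i : ℝ) ≤ x i := by exact_mod_cast hl
  have hu' : (x i + 1 : ℝ) ≤ m * rho m x i + m := by exact_mod_cast hu
  rw [Real.dist_eq, abs_le, cubeCenter]
  constructor <;> linarith

theorem rho_floor_eq_of_dist_cubeCenter_le (hm : 0 < m) {z : Fin n → ℝ} {q : Fin n → ℤ}
    (h : dist z (cubeCenter m q) ≤ (m - 1) / 2) : rho m (fun i => ⌊z i⌋) = q := by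
  refine (rho_eq_iff hm).2 fun i => ?_
  have hi := (dist_le_pi_dist _ _ i).trans h
  rw [Real.dist_eq, abs_le, cubeCenter] at hi
  constructor
  · exact Int.le_floor.2 (by push_cast; linarith)
  · exact Int.floor_lt.2 (by push_cast; linarith)

theorem exists_lipschitzWith_cubeCenter (hm : 0 < m) {h : (Fin d → ℤ) → Fin n → ℤ}
    (hh : DigitallyContinuous h) : ∃ G : (Fin d → ℝ) → Fin n → ℝ,
      LipschitzWith 1 G ∧ ∀ q, G (cubeCenter m q) = cubeCenter m (h q) := by
  let g : (Fin d → ℝ) → Fin n → ℝ := Function.extend (cubeCenter m) (cubeCenter m ∘ h) 0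
  have hg : ∀ q, g (cubeCenter m q) = cubeCenter m (h q) :=
    (cubeCenter_injective hm).extend_apply _ _
  have lip : LipschitzOnWith 1 g (range (cubeCenter m)) := by
    refine LipschitzOnWith.of_dist_le_mul ?_
    rintro _ ⟨p, rfl⟩ _ ⟨q, rfl⟩
    rw [hg, hg, dist_cubeCenter hm.le, dist_cubeCenter hm.le, NNReal.coe_one, one_mul]
    have hpq : dist (h p) (h q) ≤ dist p q := by simpa using hh.lipschitzWith.dist_le_mul p q
    gcongr
  obtain ⟨G, hG, hgG⟩ := lip.extend_pi
  exact ⟨G, hG, fun q => (hgG (mem_range_self q)).symm.trans (hg q)⟩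

theorem DigitallyContinuous.exists_lift (hm : 0 < m) {h : (Fin d → ℤ) → Fin n → ℤ}
    (hh : DigitallyContinuous h) : ∃ F : (Fin d → ℤ) → Fin n → ℤ,
      DigitallyContinuous F ∧ ∀ x, rho m (F x) = h (rho m x) := by
  obtain ⟨G, hG, hGc⟩ := exists_lipschitzWith_cubeCenter hm hh
  have hG' : ∀ x y, dist (G x) (G y) ≤ dist x y := by simpa using hG.dist_le_mul
  refine ⟨fun x i => ⌊G (fun l => x l) i⌋, fun x y hxy => ?_, fun x => ?_⟩
  · exact adj_floor ((hG' _ _).trans (adj_iff_dist_le_one.1 hxy))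
  · refine rho_floor_eq_of_dist_cubeCenter_le hm ?_
    rw [← hGc]
    exact (hG' _ _).trans (dist_cubeCenter_rho_le hm x)

end Subdivision

section Homotopy

variable {n : ℕ} {M : ℤ} {Y : Set (Fin n → ℤ)} {f g h : ℤ → Fin n → ℤ}

/-- `f` restricts to a path `I_M → Y`; its values outside `I_M` are irrelevant. -/
structure IsDigitalPath (M : ℤ) (Y : Set (Fin n → ℤ)) (f : ℤ → Fin n → ℤ) : Prop where
  mem : ∀ i ∈ Icc 0 M, f i ∈ Y
  adj_of_abs_le : ∀ i ∈ Icc 0 M, ∀ i' ∈ Icc 0 M, |i - i'| ≤ 1 → adj (f i) (f i')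

protected theorem Homotopic.symm (hfg : Homotopic M Y f g) : Homotopic M Y g f := by
  obtain ⟨N, hN, H, hmem, hadj, hf, hg⟩ := hfg
  have hrev : ∀ t ∈ Icc 0 N, N - t ∈ Icc 0 N := fun t ht =>
    ⟨by linarith [ht.2], by linarith [ht.1]⟩
  refine ⟨N, hN, fun x t => H x (N - t), fun x hx t ht => hmem x hx _ (hrev t ht), ?_, ?_, ?_⟩
  · intro x hx t ht x' hx' t' ht' hxx' htt'
    refine hadj x hx _ (hrev t ht) x' hx' _ (hrev t' ht') hxx' ?_
    rwa [sub_sub_sub_cancel_left, abs_sub_comm]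
  · simpa using hg
  · simpa using hf

theorem Homotopic.isDigitalPath_left (hfg : Homotopic M Y f g) : IsDigitalPath M Y f := by
  obtain ⟨N, hN, H, hmem, hadj, hf, -⟩ := hfg
  have h0 : (0 : ℤ) ∈ Icc 0 N := ⟨le_rfl, by omega⟩
  constructor
  · intro i hi
    exact hf i hi ▸ hmem i hi 0 h0
  · intro i hi i' hi' hii'
    rw [← hf i hi, ← hf i' hi']
    exact hadj i hi 0 h0 i' hi' 0 h0 hii' (by simp)

theorem Homotopic.isDigitalPath_right (hfg : Homotopic M Y f g) : IsDigitalPath M Y g :=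
  hfg.symm.isDigitalPath_left

protected theorem Homotopic.trans (hfg : Homotopic M Y f g) (hgh : Homotopic M Y g h) :
    Homotopic M Y f h := by
  obtain ⟨N, hN, H, hmem, hadj, hHf, hHg⟩ := hfg
  obtain ⟨N', hN', H', hmem', hadj', hHg', hHh'⟩ := hgh
  have crossing : ∀ x ∈ Icc 0 M, ∀ x' ∈ Icc 0 M, |x - x'| ≤ 1 → ∀ t t', |t - t'| ≤ 1 →
      t ≤ N → N < t' → adj (H x t) (H' x' (t' - N)) := by
    intro x hx x' hx' hxx' t t' htt' ht ht'
    rw [abs_le] at htt'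
    obtain ⟨rfl, rfl⟩ : t = N ∧ t' = N + 1 := by omega
    rw [hHg x hx, ← hHg' x hx, add_sub_cancel_left]
    exact hadj' x hx 0 ⟨le_rfl, by omega⟩ x' hx' 1 ⟨by omega, hN'⟩ hxx' (by norm_num)
  refine ⟨N + N', by omega, fun x t => if t ≤ N then H x t else H' x (t - N), ?_, ?_, ?_, ?_⟩
  · rintro x hx t ⟨ht0, ht1⟩
    dsimp only
    split_ifs with ht
    · exact hmem x hx t ⟨ht0, ht⟩
    · exact hmem' x hx _ ⟨by omega, by omega⟩
  · rintro x hx t ⟨ht0, ht1⟩ x' hx' t' ⟨ht0', ht1'⟩ hxx' htt'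
    dsimp only
    split_ifs with ht ht' ht'
    · exact hadj x hx t ⟨ht0, ht⟩ x' hx' t' ⟨ht0', ht'⟩ hxx' htt'
    · exact crossing x hx x' hx' hxx' t t' htt' ht (by omega)
    · rw [abs_sub_comm] at hxx' htt'
      exact (crossing x' hx' x hx hxx' t' t htt' ht' (by omega)).symm
    · refine hadj' x hx _ ⟨by omega, by omega⟩ x' hx' _ ⟨by omega, by omega⟩ hxx' ?_
      rwa [sub_sub_sub_cancel_right]
  · intro x hx
    simp only [if_pos (show 0 ≤ N by omega), hHf x hx]
  · intro x hx
    simp only [if_neg (show ¬N + N' ≤ N by omega), add_sub_cancel_left, hHh' x hx]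

theorem exists_forall_abs_le (M : ℤ) (f : ℤ → Fin n → ℤ) :
    ∃ B, ∀ x ∈ Icc 0 M, ∀ i, |f x i| ≤ B := by
  obtain ⟨B, hB⟩ := ((Icc 0 M ×ˢ (univ : Set (Fin n))).toFinite.image
    fun p => |f p.1 p.2|).bddAbove
  exact ⟨B, fun x hx i => hB ⟨(x, i), ⟨hx, mem_univ i⟩, rfl⟩⟩

theorem homotopic_sup_of_rho_eq {m : ℤ} (hm : 0 < m) (hf : IsDigitalPath M (Subdiv Y m) f)
    (hg : IsDigitalPath M (Subdiv Y m) g) (hfg : ∀ x ∈ Icc 0 M, rho m (f x) = rho m (g x)) :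
    Homotopic M (Subdiv Y m) f (f ⊔ g) := by
  obtain ⟨A, hA⟩ := exists_forall_abs_le M f
  obtain ⟨B, hB⟩ := exists_forall_abs_le M g
  refine ⟨max 1 (A + B), le_max_left _ _, fun x t i => max (f x i) (min (g x i) (t - A)),
    ?_, ?_, ?_, ?_⟩
  · intro x hx t _
    change rho m _ ∈ Y
    rw [rho_eq_of_le_of_le_sup hm (hfg x hx) (fun i => le_max_left _ _)
      fun i => max_le_max le_rfl (min_le_left _ _)]
    exact hf.mem x hx
  · intro x hx t _ x' hx' t' _ hxx' htt' i
    have hfi := hf.adj_of_abs_le x hx x' hx' hxx' i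
    have hgi := hg.adj_of_abs_le x hx x' hx' hxx' i
    dsimp only
    rw [abs_le] at *
    omega
  · intro x hx
    funext i
    have hfi := abs_le.1 (hA x hx i)
    dsimp only
    omega
  · intro x hx
    funext i
    have hgi := abs_le.1 (hB x hx i)
    simp only [Pi.sup_apply]
    omega

theorem homotopic_of_rho_eq {m : ℤ} (hm : 0 < m) (hf : IsDigitalPath M (Subdiv Y m) f)
    (hg : IsDigitalPath M (Subdiv Y m) g) (hfg : ∀ x ∈ Icc 0 M, rho m (f x) = rho m (g x)) :
    Homotopic M (Subdiv Y m) f g := by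
  have hf_sup := homotopic_sup_of_rho_eq hm hf hg hfg
  have hg_sup := homotopic_sup_of_rho_eq hm hg hf fun x hx => (hfg x hx).symm
  exact hf_sup.trans (sup_comm g f ▸ hg_sup).symm

theorem Homotopic.exists_lift {m L : ℤ} (hm : 0 < m) (hM : 0 ≤ M) (hL : L < m * M + m)
    (hfg : Homotopic M Y f g) : ∃ f' g', Homotopic L (Subdiv Y m) f' g' ∧
      (∀ j ∈ Icc 0 L, rho m (f' j) = f (j.fdiv m)) ∧
      ∀ j ∈ Icc 0 L, rho m (g' j) = g (j.fdiv m) := by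
  obtain ⟨N, hN, H, hmem, hadj, hf, hg⟩ := hfg
  have hN0 : 0 ≤ N := by omega
  let E : (Fin 2 → ℤ) → Fin n → ℤ := fun p => H (projIcc 0 M hM (p 0)) (projIcc 0 N hN0 (p 1))
  have hE : DigitallyContinuous E := fun p q hpq =>
    hadj _ (Subtype.prop _) _ (Subtype.prop _) _ (Subtype.prop _) _ (Subtype.prop _)
      ((abs_projIcc_sub_projIcc hM).trans (hpq 0)) ((abs_projIcc_sub_projIcc hN0).trans (hpq 1))
  obtain ⟨F, hF, hFE⟩ := hE.exists_lift hm
  have rho_F : ∀ j ∈ Icc 0 L, ∀ t ∈ Icc 0 N, rho m (F ![j, m * t]) = H (j.fdiv m) t := by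
    intro j hj t ht
    have : (m * t).fdiv m = t := (fdiv_eq_iff hm).2 ⟨le_rfl, by omega⟩
    simp [hFE, E, rho, this, projIcc_of_mem hM (fdiv_mem_Icc hm hL hj), projIcc_of_mem hN0 ht]
  refine ⟨fun j => F ![j, m * 0], fun j => F ![j, m * N],
    ⟨m * N, by nlinarith, fun j t => F ![j, t], ?_, ?_, by simp, by simp⟩, ?_, ?_⟩
  · intro j _ t _
    change rho m _ ∈ Y
    rw [hFE]
    exact hmem _ (Subtype.prop _) _ (Subtype.prop _)
  · intro j _ t _ j' _ t' _ hjj' htt'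
    exact hF _ _ (Fin.forall_fin_two.2 ⟨hjj', htt'⟩)
  · intro j hj
    rw [rho_F j hj 0 ⟨le_rfl, hN0⟩, hf _ (fdiv_mem_Icc hm hL hj)]
  · intro j hj
    rw [rho_F j hj N ⟨hN0, le_rfl⟩, hg _ (fdiv_mem_Icc hm hL hj)]

end Homotopy

section Cover

variable {n : ℕ} {k M : ℤ} {Y : Set (Fin n → ℤ)}

/-- The standard cover of a bi-infinite path `γ : ℤ → ℤⁿ`: between the centres `\bar q` and
`\overline{q+1}` it interpolates linearly between the centres of the cubes over `γ q` and
`γ (q + 1)`. -/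
def lineCover (k : ℤ) (γ : ℤ → Fin n → ℤ) (j : ℤ) : Fin n → ℤ :=
  fun i => barPt k (γ ((j - k).fdiv (2 * k + 1))) i + ((j - k) % (2 * k + 1)) *
    (γ ((j - k).fdiv (2 * k + 1) + 1) i - γ ((j - k).fdiv (2 * k + 1)) i)

theorem exists_eq_bar_add (hk : 0 ≤ k) (j : ℤ) : ∃ q r, 0 ≤ r ∧ r ≤ 2 * k ∧ j = bar k q + r := by
  have hr := Int.emod_lt_of_pos (j - k) (by omega : 0 < 2 * k + 1)
  refine ⟨(j - k) / (2 * k + 1), (j - k) % (2 * k + 1), Int.emod_nonneg _ (by omega), by omega, ?_⟩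
  linarith [Int.mul_ediv_add_emod (j - k) (2 * k + 1), bar.eq_1 k ((j - k) / (2 * k + 1))]

theorem bar_add_one (k q : ℤ) : bar k (q + 1) = bar k q + (2 * k + 1) := by
  simp only [bar]
  ring

theorem rho_eq_of_abs_sub_barPt_le (hk : 0 ≤ k) {x q : Fin n → ℤ}
    (h : ∀ i, |x i - barPt k q i| ≤ k) : rho (2 * k + 1) x = q := by
  refine (rho_eq_iff (by omega)).2 fun i => ?_
  have hi := abs_le.1 (h i)
  rw [barPt] at hi
  constructor <;> linarith

theorem lineCover_bar_add {r : ℤ} (hr0 : 0 ≤ r) (hr : r ≤ 2 * k + 1) (γ : ℤ → Fin n → ℤ) (q : ℤ)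
    (i : Fin n) : lineCover k γ (bar k q + r) i = barPt k (γ q) i + r * (γ (q + 1) i - γ q i) := by
  have interior : ∀ q r, 0 ≤ r → r < 2 * k + 1 → lineCover k γ (bar k q + r) i =
      barPt k (γ q) i + r * (γ (q + 1) i - γ q i) := by
    intro q r hr0 hr
    have hj : bar k q + r - k = r + (2 * k + 1) * q := by
      simp only [bar]
      ring
    have hdiv : (r + (2 * k + 1) * q).fdiv (2 * k + 1) = q :=
      (fdiv_eq_iff (by omega)).2 ⟨by omega, by omega⟩
    rw [lineCover, hj, hdiv, Int.add_mul_emod_self_left, Int.emod_eq_of_lt hr0 hr]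
  obtain hr | rfl := hr.lt_or_eq
  · exact interior q r hr0 hr
  · rw [← bar_add_one, ← add_zero (bar k (q + 1)), interior _ 0 le_rfl (by omega)]
    simp only [barPt]
    ring

theorem adj_lineCover_add_one (hk : 0 ≤ k) {γ : ℤ → Fin n → ℤ} (hγ : ∀ i, adj (γ i) (γ (i + 1)))
    (j : ℤ) : adj (lineCover k γ j) (lineCover k γ (j + 1)) := by
  intro i
  obtain ⟨q, r, hr0, hr, rfl⟩ := exists_eq_bar_add hk j
  rw [add_assoc, lineCover_bar_add hr0 (by omega), lineCover_bar_add (by omega) (by omega)]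
  convert hγ q i using 2
  ring

theorem rho_lineCover (hk : 0 ≤ k) {γ : ℤ → Fin n → ℤ} (hγ : ∀ i, adj (γ i) (γ (i + 1)))
    (j : ℤ) : rho (2 * k + 1) (lineCover k γ j) = γ (j.fdiv (2 * k + 1)) := by
  have hm : 0 < 2 * k + 1 := by omega
  obtain ⟨q, r, hr0, hr, rfl⟩ := exists_eq_bar_add hk j
  obtain hrk | hrk := le_or_gt r k
  · have hdiv : (bar k q + r).fdiv (2 * k + 1) = q :=
      (fdiv_eq_iff hm).2 (by rw [bar]; constructor <;> linarith)
    rw [hdiv]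
    refine rho_eq_of_abs_sub_barPt_le hk fun i => ?_
    calc |lineCover k γ (bar k q + r) i - barPt k (γ q) i|
        = r * |γ q i - γ (q + 1) i| := by
          rw [lineCover_bar_add hr0 (by omega), add_sub_cancel_left, abs_mul, abs_of_nonneg hr0,
            abs_sub_comm]
      _ ≤ r := mul_le_of_le_one_right hr0 (hγ q i)
      _ ≤ k := hrk
  · have hdiv : (bar k q + r).fdiv (2 * k + 1) = q + 1 :=
      (fdiv_eq_iff hm).2 (by rw [bar]; constructor <;> linarith)
    have hr' : 0 ≤ 2 * k + 1 - r := by omega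
    rw [hdiv]
    refine rho_eq_of_abs_sub_barPt_le hk fun i => ?_
    calc |lineCover k γ (bar k q + r) i - barPt k (γ (q + 1)) i|
        = (2 * k + 1 - r) * |γ q i - γ (q + 1) i| := by
          rw [lineCover_bar_add hr0 (by omega), ← abs_of_nonneg hr', ← abs_mul]
          congr 1
          simp only [barPt]
          ring
      _ ≤ 2 * k + 1 - r := mul_le_of_le_one_right hr' (hγ q i)
      _ ≤ k := by omega

theorem cover_eq_lineCover (hk : 0 ≤ k) (hM : 0 ≤ M) (α : ℤ → Fin n → ℤ) (j : ℤ) :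
    cover k M α j = lineCover k (fun i => α (projIcc 0 M hM i)) j := by
  have hm : 0 < 2 * k + 1 := by omega
  obtain ⟨hl, hu⟩ := (fdiv_eq_iff hm).1 (rfl : (j - k).fdiv (2 * k + 1) = _)
  unfold cover lineCover
  generalize (j - k).fdiv (2 * k + 1) = q at *
  split_ifs with hleft hright
  · have hq : q < 0 := by nlinarith
    simp [projIcc_of_le_left hM hq.le, projIcc_of_le_left hM (by omega : q + 1 ≤ 0)]
  · have hq : M ≤ q := by nlinarith
    simp [projIcc_of_right_le hM hq, projIcc_of_right_le hM (by omega : M ≤ q + 1)]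
  · have hq0 : 0 ≤ q := by nlinarith
    have hqM : q < M := by nlinarith
    simp only [projIcc_of_mem hM ⟨hq0, hqM.le⟩,
      projIcc_of_mem hM (x := q + 1) ⟨by omega, by omega⟩]

theorem IsDigitalPath.adj_projIcc {α : ℤ → Fin n → ℤ} (hα : IsDigitalPath M Y α) (hM : 0 ≤ M)
    (i : ℤ) : adj (α (projIcc 0 M hM i)) (α (projIcc 0 M hM (i + 1))) :=
  hα.adj_of_abs_le _ (Subtype.prop _) _ (Subtype.prop _)
    ((abs_projIcc_sub_projIcc hM).trans (by simp))

theorem rho_cover (hk : 0 ≤ k) (hM : 0 ≤ M) {α : ℤ → Fin n → ℤ} (hα : IsDigitalPath M Y α) {j : ℤ}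
    (hj : j ∈ Icc 0 ((2 * k + 1) * M + 2 * k)) :
    rho (2 * k + 1) (cover k M α j) = α (j.fdiv (2 * k + 1)) := by
  rw [cover_eq_lineCover hk hM, rho_lineCover hk (hα.adj_projIcc hM),
    projIcc_of_mem hM (fdiv_mem_Icc (by omega) (by omega) hj)]

protected theorem IsDigitalPath.cover (hk : 0 ≤ k) (hM : 0 ≤ M) {α : ℤ → Fin n → ℤ}
    (hα : IsDigitalPath M Y α) :
    IsDigitalPath ((2 * k + 1) * M + 2 * k) (Subdiv Y (2 * k + 1)) (cover k M α) := by
  constructor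
  · intro j hj
    change rho _ _ ∈ Y
    rw [rho_cover hk hM hα hj]
    exact hα.mem _ (fdiv_mem_Icc (by omega) (by omega) hj)
  · intro j _ j' _ hjj'
    rw [cover_eq_lineCover hk hM, cover_eq_lineCover hk hM]
    exact adj_of_abs_sub_le_one (adj_lineCover_add_one hk (hα.adj_projIcc hM)) hjj'

end Cover

theorem covers_homotopic_general {n : ℕ} {Y : Set (Fin n → ℤ)} {M k : ℤ} (hM : 0 ≤ M)
    (hk : 0 ≤ k) {α β : ℤ → Fin n → ℤ} (hαβ : Homotopic M Y α β) :
    Homotopic ((2 * k + 1) * M + 2 * k) (Subdiv Y (2 * k + 1)) (cover k M α) (cover k M β) := by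
  have hm : 0 < 2 * k + 1 := by omega
  obtain ⟨f, g, hfg, hf, hg⟩ :=
    hαβ.exists_lift (L := (2 * k + 1) * M + 2 * k) hm hM (by omega)
  have hα := hαβ.isDigitalPath_left
  have hβ := hαβ.isDigitalPath_right
  have hαf : Homotopic _ _ (cover k M α) f :=
    homotopic_of_rho_eq hm (hα.cover hk hM) hfg.isDigitalPath_left fun j hj => by
      rw [rho_cover hk hM hα hj, hf j hj]
  have hgβ : Homotopic _ _ g (cover k M β) :=
    homotopic_of_rho_eq hm hfg.isDigitalPath_right (hβ.cover hk hM) fun j hj => by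
      rw [rho_cover hk hM hβ hj, hg j hj]
  exact (hαf.trans hfg).trans hgβ

/-- if paths `α, β : I_M → Y` are homotopic, then their standard covers
`α̂, β̂ : I_{(2k+1)M+2k} → S(Y,2k+1)` are homotopic. -/
theorem covers_homotopic {n : ℕ} (Y : Set (Fin n → ℤ)) (hY : Y.Finite)
    (M k : ℤ) (hM : 1 ≤ M) (hk : 1 ≤ k)
    (α β : ℤ → Fin n → ℤ)
    (hαmaps : ∀ i ∈ Icc (0 : ℤ) M, α i ∈ Y)
    (hαcont : ∀ i ∈ Icc (0 : ℤ) M, ∀ i' ∈ Icc (0 : ℤ) M, |i - i'| ≤ 1 → adj (α i) (α i'))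
    (hβmaps : ∀ i ∈ Icc (0 : ℤ) M, β i ∈ Y)
    (hβcont : ∀ i ∈ Icc (0 : ℤ) M, ∀ i' ∈ Icc (0 : ℤ) M, |i - i'| ≤ 1 → adj (β i) (β i'))
    (hhom : Homotopic M Y α β) :
    Homotopic ((2 * k + 1) * M + 2 * k) (Subdiv Y (2 * k + 1))
      (cover k M α) (cover k M β) := by
  exact covers_homotopic_general (by omega) (by omega) hhom
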